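/- arXiv:1503.02118 — 6 statements merged into one kernel-verified Lean document; each statement's English description precedes it below -/
import Mathlib

section
/- Let M, N, U, V, Q : ℂ → ℂ^{n×n} be matrix-valued functions and let J be a fixed complex n×n matrix with Jᴴ = J. For a matrix-valued function X define X~(s) := (X(−conj(s)))ᴴ. Define Φ(s) := U~(s) J U(s) − V~(s) J V(s), Λ(s) := M~(s) J U(s) − N~(s) J V(s), Π(s) := M~(s) J M(s) − N~(s) J N(s), and, wherever V(s)+N(s)Q(s) is invertible, K(s) := (U(s)+M(s)Q(s)) (V(s)+N(s)Q(s))⁻¹. Then for every s ∈ ℂ such that V+NQ is invertible at both s and −conj(s), the identity K~(s) J K(s) = J holds if and only if Φ(s) + Q~(s) Λ(s) + Λ~(s) Q(s) + Q~(s) Π(s) Q(s) = 0. -/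
open Matrix

/-- The conjugate transfer matrix `X~(s) := (X(-conj s))ᴴ` of a matrix-valued
function `X : ℂ → ℂ^{n×n}`. -/
noncomputable def conjTransfer {n : ℕ} (X : ℂ → Matrix (Fin n) (Fin n) ℂ) :
    ℂ → Matrix (Fin n) (Fin n) ℂ :=
  fun s => (X (-(starRingEnd ℂ s)))ᴴ

/-
`K` is `(J₁, J₂)`-unitary exactly when its graph `[K; 1]` is neutral for the Hermitian form
`diag(J₁, -J₂)`. Right multiplication by the invertible denominator `V + NQ` turns the graph into
`[U; V] + [M; N] Q`, and neutrality is preserved by this congruence. Expanding the form on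
`[U; V] + [M; N] Q` yields `Φ + Q~Λ + Λ~Q + Q~ΠQ`.
-/

section Neutrality

variable {α k l m n p q : Type*}

theorem conjTranspose_add_mul_mul_mul_add_mul [NonUnitalSemiring α] [StarRing α]
    [Fintype k] [Fintype p] [Fintype q] {H : Matrix k k α} (hH : H.IsHermitian)
    (G₁ : Matrix k m α) (F₁ : Matrix k p α) (Q₁ : Matrix p m α)
    (G₂ : Matrix k n α) (F₂ : Matrix k q α) (Q₂ : Matrix q n α) :
    (G₁ + F₁ * Q₁)ᴴ * H * (G₂ + F₂ * Q₂) =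
      G₁ᴴ * H * G₂ + Q₁ᴴ * (F₁ᴴ * H * G₂) + (F₂ᴴ * H * G₁)ᴴ * Q₂
        + Q₁ᴴ * (F₁ᴴ * H * F₂) * Q₂ := by
  simp only [conjTranspose_add, conjTranspose_mul, conjTranspose_conjTranspose, hH.eq,
    Matrix.add_mul, Matrix.mul_add, Matrix.mul_assoc]
  abel

theorem star_mul_mul_eq_zero_iff {R : Type*} [Semiring R] [StarRing R] {d e : R}
    (hd : IsUnit d) (he : IsUnit e) (x : R) : star d * x * e = 0 ↔ x = 0 := by
  rw [he.mul_left_eq_zero, hd.star.mul_right_eq_zero]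

/-- The block-diagonal signature `diag(J₁, -J₂)`, whose form on the graph `[K; 1]` of a matrix `K`
is the defect `Kᴴ J₁ K - J₂` of `(J₁, J₂)`-unitarity. -/
def graphSignature [Ring α] (J₁ : Matrix p p α) (J₂ : Matrix m m α) :
    Matrix (p ⊕ m) (p ⊕ m) α :=
  fromBlocks J₁ 0 0 (-J₂)

theorem graphSignature_isHermitian [Ring α] [StarRing α] {J₁ : Matrix p p α} {J₂ : Matrix m m α}
    (hJ₁ : J₁.IsHermitian) (hJ₂ : J₂.IsHermitian) : (graphSignature J₁ J₂).IsHermitian :=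
  hJ₁.fromBlocks conjTranspose_zero hJ₂.neg

theorem conjTranspose_fromRows_mul_graphSignature_mul_fromRows [Ring α] [StarRing α]
    [Fintype p] [Fintype m] (J₁ : Matrix p p α) (J₂ : Matrix m m α)
    (A₁ : Matrix p k α) (B₁ : Matrix m k α) (A₂ : Matrix p l α) (B₂ : Matrix m l α) :
    (fromRows A₁ B₁)ᴴ * graphSignature J₁ J₂ * fromRows A₂ B₂ =
      A₁ᴴ * J₁ * A₂ - B₁ᴴ * J₂ * B₂ := by
  simp [graphSignature, conjTranspose_fromRows_eq_fromCols_conjTranspose,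
    fromCols_mul_fromBlocks, fromCols_mul_fromRows, sub_eq_add_neg]

theorem fromRows_add_fromRows_mul [Semiring α] [Fintype q]
    (U : Matrix p m α) (V : Matrix l m α) (M : Matrix p q α) (N : Matrix l q α)
    (Q : Matrix q m α) :
    fromRows U V + fromRows M N * Q = fromRows (U + M * Q) (V + N * Q) := by
  rw [fromRows_mul]
  ext (_ | _) _ <;> rfl

variable [CommRing α] [Fintype m] [DecidableEq m]

theorem fromRows_mul_inv_one_mul (A : Matrix p m α) {D : Matrix m m α} (hD : IsUnit D) :
    fromRows (A * D⁻¹) 1 * D = fromRows A D := by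
  rw [fromRows_mul, Matrix.one_mul,
    nonsing_inv_mul_cancel_right _ _ ((isUnit_iff_isUnit_det D).mp hD)]

variable [StarRing α] [Fintype p]

theorem mul_inv_jj_unitary_iff_graph_neutral (J₁ : Matrix p p α) (J₂ : Matrix m m α)
    (A₁ A₂ : Matrix p m α) {D₁ D₂ : Matrix m m α} (hD₁ : IsUnit D₁) (hD₂ : IsUnit D₂) :
    (A₁ * D₁⁻¹)ᴴ * J₁ * (A₂ * D₂⁻¹) = J₂ ↔
      (fromRows A₁ D₁)ᴴ * graphSignature J₁ J₂ * fromRows A₂ D₂ = 0 := by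
  have graph_congruence : (fromRows A₁ D₁)ᴴ * graphSignature J₁ J₂ * fromRows A₂ D₂ =
      star D₁ * ((A₁ * D₁⁻¹)ᴴ * J₁ * (A₂ * D₂⁻¹) - J₂) * D₂ := by
    calc
      _ = (fromRows (A₁ * D₁⁻¹) (1 : Matrix m m α) * D₁)ᴴ * graphSignature J₁ J₂ *
            (fromRows (A₂ * D₂⁻¹) (1 : Matrix m m α) * D₂) := by
        rw [fromRows_mul_inv_one_mul A₁ hD₁, fromRows_mul_inv_one_mul A₂ hD₂]
      _ = D₁ᴴ * ((fromRows (A₁ * D₁⁻¹) (1 : Matrix m m α))ᴴ * graphSignature J₁ J₂ *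
            fromRows (A₂ * D₂⁻¹) (1 : Matrix m m α)) * D₂ := by
        simp only [conjTranspose_mul, Matrix.mul_assoc]
      _ = _ := by
        rw [conjTranspose_fromRows_mul_graphSignature_mul_fromRows, conjTranspose_one,
          Matrix.one_mul, Matrix.mul_one, star_eq_conjTranspose]
  rw [graph_congruence, star_mul_mul_eq_zero_iff hD₁ hD₂, sub_eq_zero]

end Neutrality

theorem jj_unitary_iff_youla_kucera_constraint_general {S α m p q : Type*}
    [CommRing α] [StarRing α] [Fintype m] [DecidableEq m] [Fintype p] [Fintype q]
    {σ : S → S} (hσ : Function.Involutive σ)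
    {J₁ : Matrix p p α} {J₂ : Matrix m m α} (hJ₁ : J₁.IsHermitian) (hJ₂ : J₂.IsHermitian)
    (U : S → Matrix p m α) (V : S → Matrix m m α)
    (M : S → Matrix p q α) (N : S → Matrix m q α) (Q : S → Matrix q m α)
    {K : S → Matrix p m α} {Phi : S → Matrix m m α} {Lam : S → Matrix q m α}
    {Pim : S → Matrix q q α}
    (hK : ∀ z, K z = (U z + M z * Q z) * (V z + N z * Q z)⁻¹)
    (hPhi : ∀ z, Phi z = (U (σ z))ᴴ * J₁ * U z - (V (σ z))ᴴ * J₂ * V z)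
    (hLam : ∀ z, Lam z = (M (σ z))ᴴ * J₁ * U z - (N (σ z))ᴴ * J₂ * V z)
    (hPim : ∀ z, Pim z = (M (σ z))ᴴ * J₁ * M z - (N (σ z))ᴴ * J₂ * N z)
    {s : S} (hs : IsUnit (V s + N s * Q s))
    (hσs : IsUnit (V (σ s) + N (σ s) * Q (σ s))) :
    (K (σ s))ᴴ * J₁ * K s = J₂ ↔
      Phi s + (Q (σ s))ᴴ * Lam s + (Lam (σ s))ᴴ * Q s + (Q (σ s))ᴴ * Pim s * Q s = 0 := by
  rw [hK, hK, mul_inv_jj_unitary_iff_graph_neutral J₁ J₂ _ _ hσs hs,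
    ← fromRows_add_fromRows_mul, ← fromRows_add_fromRows_mul,
    conjTranspose_add_mul_mul_mul_add_mul (graphSignature_isHermitian hJ₁ hJ₂)]
  simp only [conjTranspose_fromRows_mul_graphSignature_mul_fromRows, hPhi, hLam, hPim, hσ s]

/-- For the controller `K = (U + MQ)(V + NQ)⁻¹` given by a right
matrix fraction description, and for any `s ∈ ℂ` at which `V + NQ` is
invertible both at `s` and at `-conj s`, the `(J,J)`-unitarity identity
`K~(s) J K(s) = J` holds iff `Φ(s) + Q~(s)Λ(s) + Λ~(s)Q(s) + Q~(s)Π(s)Q(s) = 0`,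
where `Φ = U~JU - V~JV`, `Λ = M~JU - N~JV`, `Π = M~JM - N~JN`. -/
theorem jj_unitary_iff_youla_kucera_constraint (n : ℕ)
    (M N U V Q : ℂ → Matrix (Fin n) (Fin n) ℂ)
    (J : Matrix (Fin n) (Fin n) ℂ) (hJ : Jᴴ = J)
    (K Phi Lam Pim : ℂ → Matrix (Fin n) (Fin n) ℂ)
    (hK : ∀ z : ℂ, K z = (U z + M z * Q z) * (V z + N z * Q z)⁻¹)
    (hPhi : ∀ z : ℂ, Phi z = conjTransfer U z * J * U z - conjTransfer V z * J * V z)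
    (hLam : ∀ z : ℂ, Lam z = conjTransfer M z * J * U z - conjTransfer N z * J * V z)
    (hPim : ∀ z : ℂ, Pim z = conjTransfer M z * J * M z - conjTransfer N z * J * N z)
    (s : ℂ)
    (hs : IsUnit (V s + N s * Q s))
    (hs' : IsUnit (V (-(starRingEnd ℂ s)) + N (-(starRingEnd ℂ s)) * Q (-(starRingEnd ℂ s)))) :
    conjTransfer K s * J * K s = J ↔
      Phi s + conjTransfer Q s * Lam s + conjTransfer Lam s * Q s
        + conjTransfer Q s * Pim s * Q s = 0 := by
  exact jj_unitary_iff_youla_kucera_constraint_general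
    (σ := fun z => -(starRingEnd ℂ z)) (fun z => by simp) hJ hJ U V M N Q hK hPhi hLam hPim hs hs'
end

section
/- Let M̂, N̂, Û, V̂, Q : ℂ → ℂ^{n×n} be matrix-valued functions and let J be a fixed complex n×n matrix with Jᴴ = J and J² = I. For a matrix-valued function X define X~(s) := (X(−conj(s)))ᴴ. Define Φ̂(s) := Û(s) J Û~(s) − V̂(s) J V̂~(s), Λ̂(s) := M̂(s) J Û~(s) − N̂(s) J V̂~(s), Π̂(s) := M̂(s) J M̂~(s) − N̂(s) J N̂~(s), and, wherever V̂(s)+Q(s)N̂(s) is invertible, K(s) := (V̂(s)+Q(s)N̂(s))⁻¹ (Û(s)+Q(s)M̂(s)). Then for every s ∈ ℂ such that V̂+QN̂ is invertible at both s and −conj(s), the dual (J,J)-unitarity identity K(s) J K~(s) = J holds if and only if Φ̂(s) + Q(s) Λ̂(s) + Λ̂~(s) Q~(s) + Q(s) Π̂(s) Q~(s) = 0. -/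
open Matrix

/-- The conjugate `s ↦ (X (σ s))ᴴ` of a matrix-valued function `X` along a reflection `σ` of its
domain. The reflection `σ s = -conj s` in the imaginary axis gives `conjTransfer`; the reflection
`σ z = 1 / conj z` in the unit circle gives its discrete-time counterpart. -/
def reflectedConjTranspose {S R m p : Type*} [Star R] (σ : S → S) (X : S → Matrix p m R) :
    S → Matrix m p R :=
  fun s => (X (σ s))ᴴ

section

variable {R l m p p' q q' : Type*}

theorem add_mul_mul_mul_conjTranspose_add_mul [Fintype m] [Fintype q] [Fintype q']
    [NonUnitalSemiring R] [StarRing R] {J : Matrix m m R} (hJ : J.IsHermitian)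
    (U : Matrix p m R) (U' : Matrix p' m R) (M : Matrix q m R) (M' : Matrix q' m R)
    (Q : Matrix p q R) (Q' : Matrix p' q' R) :
    (U + Q * M) * J * (U' + Q' * M')ᴴ =
      U * J * U'ᴴ + Q * (M * J * U'ᴴ) + (M' * J * Uᴴ)ᴴ * Q'ᴴ + Q * (M * J * M'ᴴ) * Q'ᴴ := by
  simp only [conjTranspose_add, conjTranspose_mul, conjTranspose_conjTranspose, hJ.eq,
    Matrix.add_mul, Matrix.mul_add, Matrix.mul_assoc]
  abel

theorem inv_mul_mul_mul_conjTranspose_inv_mul_eq_iff [Fintype l] [Fintype m] [Fintype p]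
    [Fintype p'] [DecidableEq p] [DecidableEq p'] [CommRing R] [StarRing R]
    {A : Matrix p p R} {B : Matrix p' p' R} (hA : IsUnit A) (hB : IsUnit B)
    (X : Matrix p m R) (Y : Matrix p' l R) (J : Matrix m l R) (J' : Matrix p p' R) :
    A⁻¹ * X * J * (B⁻¹ * Y)ᴴ = J' ↔ X * J * Yᴴ = A * J' * Bᴴ := by
  let _ : Invertible A := hA.invertible
  let _ : Invertible Bᴴ := hB.star.invertible
  calc A⁻¹ * X * J * (B⁻¹ * Y)ᴴ = J'
    _ ↔ A⁻¹ * (X * J * Yᴴ * Bᴴ⁻¹) = J' := by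
      simp only [conjTranspose_mul, conjTranspose_nonsing_inv, Matrix.mul_assoc]
    _ ↔ X * J * Yᴴ * Bᴴ⁻¹ = A * J' := inv_mul_eq_iff_eq_mul_of_invertible ..
    _ ↔ X * J * Yᴴ = A * J' * Bᴴ := mul_inv_eq_iff_eq_mul_of_invertible ..

end

theorem dual_jj_unitary_iff_dual_youla_kucera_constraint_general {S R m p q : Type*}
    [Fintype m] [Fintype p] [Fintype q] [DecidableEq p] [CommRing R] [StarRing R]
    {σ : S → S} (hσ : Function.Involutive σ)
    {M : S → Matrix q m R} {N : S → Matrix q p R} {U : S → Matrix p m R}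
    {V : S → Matrix p p R} {Q : S → Matrix p q R}
    {J : Matrix m m R} {J' : Matrix p p R} (hJ : J.IsHermitian) (hJ' : J'.IsHermitian)
    {K : S → Matrix p m R} {Phi : S → Matrix p p R} {Lam : S → Matrix q p R}
    {Pim : S → Matrix q q R}
    (hK : ∀ z, K z = (V z + Q z * N z)⁻¹ * (U z + Q z * M z))
    (hPhi : ∀ z, Phi z =
      U z * J * reflectedConjTranspose σ U z - V z * J' * reflectedConjTranspose σ V z)
    (hLam : ∀ z, Lam z =
      M z * J * reflectedConjTranspose σ U z - N z * J' * reflectedConjTranspose σ V z)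
    (hPim : ∀ z, Pim z =
      M z * J * reflectedConjTranspose σ M z - N z * J' * reflectedConjTranspose σ N z)
    {s : S} (hs : IsUnit (V s + Q s * N s)) (hσs : IsUnit (V (σ s) + Q (σ s) * N (σ s))) :
    K s * J * reflectedConjTranspose σ K s = J' ↔
      Phi s + Q s * Lam s + reflectedConjTranspose σ Lam s * reflectedConjTranspose σ Q s
        + Q s * Pim s * reflectedConjTranspose σ Q s = 0 := by
  have constraint_eq :
      Phi s + Q s * Lam s + (Lam (σ s))ᴴ * (Q (σ s))ᴴ + Q s * Pim s * (Q (σ s))ᴴ =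
        (U s + Q s * M s) * J * (U (σ s) + Q (σ s) * M (σ s))ᴴ
          - (V s + Q s * N s) * J' * (V (σ s) + Q (σ s) * N (σ s))ᴴ := by
    simp only [add_mul_mul_mul_conjTranspose_add_mul hJ, add_mul_mul_mul_conjTranspose_add_mul hJ',
      hPhi, hLam, hPim, reflectedConjTranspose, hσ s, conjTranspose_sub,
      Matrix.mul_sub, Matrix.sub_mul]
    abel
  simp only [reflectedConjTranspose]
  rw [constraint_eq, sub_eq_zero, hK, hK]
  exact inv_mul_mul_mul_conjTranspose_inv_mul_eq_iff hs hσs ..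

/-- For the controller `K = (V̂ + QN̂)⁻¹(Û + QM̂)` given by a left
matrix fraction description, and for any `s ∈ ℂ` at which `V̂ + QN̂` is
invertible both at `s` and at `-conj s`, the dual `(J,J)`-unitarity identity
`K(s) J K~(s) = J` holds iff
`Φ̂(s) + Q(s)Λ̂(s) + Λ̂~(s)Q~(s) + Q(s)Π̂(s)Q~(s) = 0`, where
`Φ̂ = ÛJÛ~ - V̂JV̂~`, `Λ̂ = M̂JÛ~ - N̂JV̂~`, `Π̂ = M̂JM̂~ - N̂JN̂~`. -/
theorem dual_jj_unitary_iff_dual_youla_kucera_constraint (n : ℕ)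
    (Mh Nh Uh Vh Q : ℂ → Matrix (Fin n) (Fin n) ℂ)
    (J : Matrix (Fin n) (Fin n) ℂ) (hJ : Jᴴ = J) (hJ2 : J * J = 1)
    (K Phih Lamh Pimh : ℂ → Matrix (Fin n) (Fin n) ℂ)
    (hK : ∀ z : ℂ, K z = (Vh z + Q z * Nh z)⁻¹ * (Uh z + Q z * Mh z))
    (hPhih : ∀ z : ℂ, Phih z = Uh z * J * conjTransfer Uh z - Vh z * J * conjTransfer Vh z)
    (hLamh : ∀ z : ℂ, Lamh z = Mh z * J * conjTransfer Uh z - Nh z * J * conjTransfer Vh z)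
    (hPimh : ∀ z : ℂ, Pimh z = Mh z * J * conjTransfer Mh z - Nh z * J * conjTransfer Nh z)
    (s : ℂ)
    (hs : IsUnit (Vh s + Q s * Nh s))
    (hs' : IsUnit (Vh (-(starRingEnd ℂ s)) + Q (-(starRingEnd ℂ s)) * Nh (-(starRingEnd ℂ s)))) :
    K s * J * conjTransfer K s = J ↔
      Phih s + Q s * Lamh s + conjTransfer Lamh s * conjTransfer Q s
        + Q s * Pimh s * conjTransfer Q s = 0 := by
  exact dual_jj_unitary_iff_dual_youla_kucera_constraint_general
    (σ := fun z => -(starRingEnd ℂ z)) (fun z => by simp) hJ hJ hK hPhih hLamh hPimh hs hs'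
end

section
/- Let P₁₁ ∈ ℂ^{p×r}, P₁₂ ∈ ℂ^{p×n}, P₂₁ ∈ ℂ^{n×r}, P₂₂ ∈ ℂ^{n×n}, and let M, N, U, V, M̂, N̂, Û, V̂, Q ∈ ℂ^{n×n}. Assume: (i) M and M̂ are invertible and P₂₂ = N M⁻¹ = M̂⁻¹ N̂; (ii) the general Bézout identity [[V̂, −Û],[−N̂, M̂]] · [[M, U],[N, V]] = I_{2n} holds; (iii) V + NQ is invertible, and set K := (U + MQ)(V + NQ)⁻¹. Then I − P₂₂K is invertible with (I − P₂₂K)⁻¹ = (V + NQ)M̂, and the lower linear fractional transformation satisfies P₁₁ + P₁₂ K (I − P₂₂K)⁻¹ P₂₁ = (P₁₁ + P₁₂ U M̂ P₂₁) + (P₁₂ M) Q (M̂ P₂₁), i.e. the closed-loop matrix equals T₀ + T₁ Q T₂ with T₀ := P₁₁ + P₁₂ U M̂ P₂₁, T₁ := P₁₂ M, T₂ := M̂ P₂₁. -/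
open Matrix

/-!
Replacing `(U, V)` by `(X, Y) = (U + MQ, V + NQ)` preserves the Bézout equation `M̂V - N̂U = 1`,
since `M̂N = N̂M`. So `Q` may be absorbed: for `K = XY⁻¹` with `M̂Y - N̂X = 1` one has
`M̂(1 - P₂₂K)Y = M̂Y - N̂X = 1`. All three factors are square, so `(1 - P₂₂K)⁻¹ = YM̂`. Hence
`K(1 - P₂₂K)⁻¹ = XM̂`, which is affine in `Q` because `X` is.
-/

section Youla

variable {p r m n R : Type*} [Fintype m] [DecidableEq m] [Fintype n]

section Ring

variable [Ring R]

theorem lower_bezout_of_fromBlocks_mul_fromBlocks_eq_one [DecidableEq n]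
    {M Vh : Matrix n n R} {N Nh : Matrix m n R} {U Uh : Matrix n m R} {V Mh : Matrix m m R}
    (hBezout : fromBlocks Vh (-Uh) (-Nh) Mh * fromBlocks M U N V = 1) :
    Mh * N = Nh * M ∧ Mh * V - Nh * U = 1 := by
  rw [fromBlocks_multiply, ← fromBlocks_one, fromBlocks_inj] at hBezout
  obtain ⟨-, -, hNM, hUV⟩ := hBezout
  rw [Matrix.neg_mul, neg_add_eq_sub] at hNM hUV
  exact ⟨sub_eq_zero.mp hNM, hUV⟩

theorem bezout_add_mul {M : Matrix n n R} {N Nh : Matrix m n R} {U : Matrix n m R}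
    {V Mh : Matrix m m R} (hNM : Mh * N = Nh * M) (hUV : Mh * V - Nh * U = 1)
    (Q : Matrix n m R) :
    Mh * (V + N * Q) - Nh * (U + M * Q) = 1 := by
  calc Mh * (V + N * Q) - Nh * (U + M * Q)
      = (Mh * V - Nh * U) + (Mh * N * Q - Nh * M * Q) := by
        simp only [Matrix.mul_add, Matrix.mul_assoc, add_sub_add_comm]
    _ = 1 := by rw [hUV, hNM, sub_self, add_zero]

theorem one_sub_mul_mul_eq_one_of_bezout [IsStablyFiniteRing R]
    {P : Matrix m n R} {K X : Matrix n m R} {Y Mh : Matrix m m R}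
    (hKY : K * Y = X) (hXY : Mh * Y - Mh * P * X = 1) :
    (1 - P * K) * (Y * Mh) = 1 := by
  have hMhY : Mh * ((1 - P * K) * Y) = 1 := by
    calc Mh * ((1 - P * K) * Y)
        = Mh * Y - Mh * P * (K * Y) := by
          simp only [Matrix.sub_mul, Matrix.mul_sub, Matrix.one_mul, Matrix.mul_assoc]
      _ = 1 := by rw [hKY, hXY]
  rw [← Matrix.mul_assoc]
  exact mul_eq_one_comm.mp hMhY

end Ring

section CommRing

variable [CommRing R]

/-- The lower linear fractional transformation of the block matrix `[[P₁₁, P₁₂], [P₂₁, P₂₂]]` and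
`K`, i.e. the closed-loop matrix of the plant `P` under the feedback `K`. The inverse is that of
`Matrix.inv`, so the value is meaningful only when `1 - P₂₂ * K` is invertible. -/
noncomputable def lowerLFT (P11 : Matrix p r R) (P12 : Matrix p n R) (P21 : Matrix m r R)
    (P22 : Matrix m n R) (K : Matrix n m R) : Matrix p r R :=
  P11 + P12 * K * (1 - P22 * K)⁻¹ * P21

theorem lowerLFT_eq_of_inv_eq {P11 : Matrix p r R} {P12 : Matrix p n R} {P21 : Matrix m r R}
    {P22 : Matrix m n R} {K X : Matrix n m R} {Y Mh : Matrix m m R}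
    (hKY : K * Y = X) (hinv : (1 - P22 * K)⁻¹ = Y * Mh) :
    lowerLFT P11 P12 P21 P22 K = P11 + P12 * X * Mh * P21 := by
  simp only [lowerLFT, hinv, ← hKY, Matrix.mul_assoc]

theorem closed_loop_affine_in_youla_parameter_general
    (P11 : Matrix p r R) (P12 : Matrix p n R) (P21 : Matrix m r R) {P22 : Matrix m n R}
    {M : Matrix n n R} {N Nh : Matrix m n R} {U Q K : Matrix n m R} {V Mh : Matrix m m R}
    (hP22 : Mh * P22 = Nh) (hNM : Mh * N = Nh * M) (hUV : Mh * V - Nh * U = 1)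
    (hVNQ : IsUnit (V + N * Q)) (hK : K = (U + M * Q) * (V + N * Q)⁻¹) :
    IsUnit (1 - P22 * K)
      ∧ (1 - P22 * K)⁻¹ = (V + N * Q) * Mh
      ∧ lowerLFT P11 P12 P21 P22 K
          = (P11 + P12 * U * Mh * P21) + (P12 * M) * Q * (Mh * P21) := by
  have hKY : K * (V + N * Q) = U + M * Q := by
    rw [hK, nonsing_inv_mul_cancel_right _ _ ((isUnit_iff_isUnit_det _).mp hVNQ)]
  have hright : (1 - P22 * K) * ((V + N * Q) * Mh) = 1 :=
    one_sub_mul_mul_eq_one_of_bezout hKY (hP22 ▸ bezout_add_mul hNM hUV Q)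
  have hinv : (1 - P22 * K)⁻¹ = (V + N * Q) * Mh := inv_eq_right_inv hright
  refine ⟨.of_mul_eq_one _ hright, hinv, ?_⟩
  rw [lowerLFT_eq_of_inv_eq hKY hinv]
  simp only [Matrix.mul_add, Matrix.add_mul, Matrix.mul_assoc, add_assoc]

end CommRing

end Youla

/-- Under a doubly coprime factorization `P₂₂ = NM⁻¹ = M̂⁻¹N̂`
satisfying the general Bézout identity, for the controller
`K = (U + MQ)(V + NQ)⁻¹` the matrix `I - P₂₂K` is invertible with inverse
`(V + NQ)M̂`, and the lower LFT of the plant and controller equals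
`T₀ + T₁ Q T₂` with `T₀ = P₁₁ + P₁₂UM̂P₂₁`, `T₁ = P₁₂M`, `T₂ = M̂P₂₁`. -/
theorem closed_loop_affine_in_youla_parameter (p r n : ℕ)
    (P11 : Matrix (Fin p) (Fin r) ℂ) (P12 : Matrix (Fin p) (Fin n) ℂ)
    (P21 : Matrix (Fin n) (Fin r) ℂ)
    (P22 M N U V Mh Nh Uh Vh Q : Matrix (Fin n) (Fin n) ℂ)
    (hM : IsUnit M) (hMh : IsUnit Mh)
    (hPr : P22 = N * M⁻¹) (hPl : P22 = Mh⁻¹ * Nh)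
    (hBezout : Matrix.fromBlocks Vh (-Uh) (-Nh) Mh *
        Matrix.fromBlocks M U N V = 1)
    (hVNQ : IsUnit (V + N * Q))
    (K : Matrix (Fin n) (Fin n) ℂ)
    (hK : K = (U + M * Q) * (V + N * Q)⁻¹) :
    IsUnit (1 - P22 * K)
      ∧ (1 - P22 * K)⁻¹ = (V + N * Q) * Mh
      ∧ P11 + P12 * K * (1 - P22 * K)⁻¹ * P21
          = (P11 + P12 * U * Mh * P21) + (P12 * M) * Q * (Mh * P21) := by
  obtain ⟨hNM, hUV⟩ := lower_bezout_of_fromBlocks_mul_fromBlocks_eq_one hBezout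
  have hP22 : Mh * P22 = Nh := by
    rw [hPl, mul_nonsing_inv_cancel_left _ _ ((isUnit_iff_isUnit_det _).mp hMh)]
  exact closed_loop_affine_in_youla_parameter_general P11 P12 P21 hP22 hNM hUV hVNQ hK
end

section
/- Let F := RatFunc ℂ be the field of complex rational functions and RH∞ ⊂ F the subring of proper stable rational functions (f ∈ RH∞ iff f = 0, or every complex root z of the denominator of f satisfies Re z < 0 and the degree of the numerator of f is at most the degree of its denominator). Let P be an n×n matrix over F admitting a doubly coprime factorization: matrices M, N, U, V, M̂, N̂, Û, V̂ over F with all entries in RH∞, M and M̂ invertible over F, P = N M⁻¹ = M̂⁻¹ N̂, and [[V̂, −Û],[−N̂, M̂]] · [[M, U],[N, V]] = I_{2n}. Then an n×n matrix K over F internally stabilizes P — meaning the 2n×2n block matrix [[I, −K],[−P, I]] is invertible over F and all entries of its inverse lie in RH∞ — if and only if there exists an n×n matrix Q with all entries in RH∞ such that V + NQ is invertible over F and K = (U + MQ)(V + NQ)⁻¹. -/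
open Matrix Polynomial

/-- A rational function belongs to `RH∞` (proper stable rational functions):
it is zero, or all roots of its denominator lie in the open left half-plane
and its numerator degree does not exceed its denominator degree. -/
def IsRHInf (f : RatFunc ℂ) : Prop :=
  f = 0 ∨ ((∀ z : ℂ, f.denom.IsRoot z → z.re < 0) ∧ f.num.degree ≤ f.denom.degree)

/-- A controller `K` internally stabilizes the plant `P` (both `n×n` over the
field of rational functions) if the block matrix `[[I, -K],[-P, I]]` is
invertible with all entries of its inverse in `RH∞`. -/
def InternallyStabilizes {n : ℕ}
    (P K : Matrix (Fin n) (Fin n) (RatFunc ℂ)) : Prop :=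
  IsUnit (Matrix.fromBlocks 1 (-K) (-P) 1)
    ∧ ∀ i j, IsRHInf ((Matrix.fromBlocks 1 (-K) (-P) 1)⁻¹ i j)

/-!
Write `W = [[M, U], [N, V]]` and `W⁻¹ = [[V̂, -Û], [-N̂, M̂]]`, both stable.
The equation `W [Q; 1] = [K; 1] Y` says that `Y = V + N Q` and `K Y = U + M Q`. Multiplying it by
`W⁻¹` shows that for given `K` and `Y` it has a stable solution `Q` exactly when
`(M̂ - N̂ K) Y = 1` and `[K; 1] Y` is stable.

Such a `Y` also determines the closed loop, since `M̂ - N̂ K = M̂ (1 - P K)` gives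
`[[1, -K], [-P, 1]]⁻¹ = [[1, 0], [0, 0]] + [K; 1] Y [N̂, M̂]`.
The row `[N̂, M̂]` has the stable right inverse `[-U; V]`, so this inverse is stable if and only if
`[K; 1] Y` is.
-/

section ProperRatFunc

variable {k : Type*} [Field k] {f g : RatFunc k}

theorem intDegree_mul_nonpos (hf : f.intDegree ≤ 0) (hg : g.intDegree ≤ 0) :
    (f * g).intDegree ≤ 0 := by
  rcases eq_or_ne f 0 with rfl | hf0
  · simp
  rcases eq_or_ne g 0 with rfl | hg0
  · simp
  exact (RatFunc.intDegree_mul hf0 hg0).trans_le (add_nonpos hf hg)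

theorem intDegree_add_nonpos (hf : f.intDegree ≤ 0) (hg : g.intDegree ≤ 0) :
    (f + g).intDegree ≤ 0 := by
  rcases eq_or_ne g 0 with rfl | hg0
  · simpa using hf
  rcases eq_or_ne (f + g) 0 with hfg | hfg
  · simp [hfg]
  exact (RatFunc.intDegree_add_le hg0 hfg).trans (max_le hf hg)

theorem intDegree_nonpos_iff : f.intDegree ≤ 0 ↔ f.num.degree ≤ f.denom.degree := by
  rw [RatFunc.intDegree, sub_nonpos, Nat.cast_le, natDegree_le_iff_degree_le,
    degree_eq_natDegree f.denom_ne_zero]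

theorem denom_neg_dvd (f : RatFunc k) : (-f).denom ∣ f.denom := by
  have h := RatFunc.denom_mul_dvd (RatFunc.C (-1)) f
  rwa [RatFunc.denom_C, one_mul, map_neg, map_one, neg_one_mul] at h

/-- The ring of proper rational functions all of whose `k`-rational poles lie in `Z`; it is `RH∞`
when `k = ℂ` and `Z` is the open left half-plane. Properness is expressed by `RatFunc.intDegree`,
which is `0` at the zero function. -/
def properRatFunc (Z : Set k) : Subring (RatFunc k) where
  carrier := {f | (∀ z, f.denom.IsRoot z → z ∈ Z) ∧ f.intDegree ≤ 0}
  zero_mem' := by simp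
  one_mem' := by simp
  add_mem' {f g} hf hg :=
    ⟨fun z hz ↦ (root_mul.mp (hz.dvd (RatFunc.denom_add_dvd f g))).elim (hf.1 z) (hg.1 z),
      intDegree_add_nonpos hf.2 hg.2⟩
  mul_mem' {f g} hf hg :=
    ⟨fun z hz ↦ (root_mul.mp (hz.dvd (RatFunc.denom_mul_dvd f g))).elim (hf.1 z) (hg.1 z),
      intDegree_mul_nonpos hf.2 hg.2⟩
  neg_mem' {f} hf := ⟨fun z hz ↦ hf.1 z (hz.dvd (denom_neg_dvd f)), by simpa using hf.2⟩

theorem isRHInf_iff_mem_properRatFunc {f : RatFunc ℂ} :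
    IsRHInf f ↔ f ∈ properRatFunc {z : ℂ | z.re < 0} := by
  change f = 0 ∨ _ ↔ (∀ z : ℂ, f.denom.IsRoot z → z.re < 0) ∧ f.intDegree ≤ 0
  rw [intDegree_nonpos_iff, or_iff_right_of_imp]
  rintro rfl
  simp

end ProperRatFunc

section MatricesOverSubring

variable {F : Type*} [Ring F] {R : Subring F} {l m n p : Type*}

theorem mul_mem_matrix [Fintype m] {A : Matrix l m F} {B : Matrix m n F}
    (hA : A ∈ R.toAddSubgroup.matrix) (hB : B ∈ R.toAddSubgroup.matrix) :
    A * B ∈ R.toAddSubgroup.matrix :=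
  fun i j ↦ R.sum_mem fun k _ ↦ R.mul_mem (hA i k) (hB k j)

theorem one_mem_matrix [DecidableEq m] : (1 : Matrix m m F) ∈ R.toAddSubgroup.matrix :=
  fun i j ↦ by
    rw [Matrix.one_apply]
    split_ifs
    exacts [R.one_mem, R.zero_mem]

theorem mul_mem_matrix_iff_of_mul_eq_one [Fintype m] [Fintype n] [DecidableEq m]
    {X : Matrix l m F} {A : Matrix m n F} {B : Matrix n m F} (hA : A ∈ R.toAddSubgroup.matrix)
    (hB : B ∈ R.toAddSubgroup.matrix) (hAB : A * B = 1) :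
    X * A ∈ R.toAddSubgroup.matrix ↔ X ∈ R.toAddSubgroup.matrix := by
  refine ⟨fun hXA ↦ ?_, fun hX ↦ mul_mem_matrix hX hA⟩
  simpa [Matrix.mul_assoc, hAB] using mul_mem_matrix hXA hB

theorem fromRows_mem_matrix_iff {A : Matrix l n F} {B : Matrix m n F} :
    fromRows A B ∈ R.toAddSubgroup.matrix ↔
      A ∈ R.toAddSubgroup.matrix ∧ B ∈ R.toAddSubgroup.matrix :=
  Sum.forall

theorem fromCols_mem_matrix_iff {A : Matrix l m F} {B : Matrix l n F} :
    fromCols A B ∈ R.toAddSubgroup.matrix ↔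
      A ∈ R.toAddSubgroup.matrix ∧ B ∈ R.toAddSubgroup.matrix :=
  (forall_congr' fun _ ↦ Sum.forall).trans forall_and

theorem fromBlocks_mem_matrix_iff {A : Matrix l n F} {B : Matrix l p F} {C : Matrix m n F}
    {D : Matrix m p F} :
    fromBlocks A B C D ∈ R.toAddSubgroup.matrix ↔
      (A ∈ R.toAddSubgroup.matrix ∧ B ∈ R.toAddSubgroup.matrix) ∧
        C ∈ R.toAddSubgroup.matrix ∧ D ∈ R.toAddSubgroup.matrix := by
  rw [← fromRows_fromCols_eq_fromBlocks, fromRows_mem_matrix_iff, fromCols_mem_matrix_iff,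
    fromCols_mem_matrix_iff]

theorem forall_isRHInf_iff_mem_matrix {A : Matrix m n (RatFunc ℂ)} :
    (∀ i j, IsRHInf (A i j)) ↔ A ∈ (properRatFunc {z : ℂ | z.re < 0}).toAddSubgroup.matrix :=
  forall₂_congr fun _ _ ↦ isRHInf_iff_mem_properRatFunc

end MatricesOverSubring

section YoulaKucera

variable {F : Type*} [CommRing F] {R : Subring F} {m p : Type*}
  [Fintype m] [Fintype p] [DecidableEq p]
  {P Nh N : Matrix p m F} {K Q U Uh : Matrix m p F} {M Vh : Matrix m m F} {Mh V Y : Matrix p p F}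

/-- The column `[K; 1]` spanning the graph of the controller `y ↦ K y`, with the value of `K`
placed above its argument. -/
abbrev graphMatrix (K : Matrix m p F) : Matrix (m ⊕ p) p F := fromRows K 1

theorem fromBlocks_mul_graphMatrix_eq_iff :
    fromBlocks M U N V * graphMatrix Q = graphMatrix K * Y ↔
      U + M * Q = K * Y ∧ V + N * Q = Y := by
  rw [fromBlocks_mul_fromRows, fromRows_mul, fromRows_ext_iff]
  simp only [Matrix.mul_one, Matrix.one_mul, add_comm]

variable [DecidableEq m]

/-- The matrix of the feedback equations `u - K y = e₁`, `y - P u = e₂` of the closed loop, whose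
inverse is the closed-loop transfer matrix. -/
abbrev feedbackMatrix (P : Matrix p m F) (K : Matrix m p F) : Matrix (m ⊕ p) (m ⊕ p) F :=
  fromBlocks 1 (-K) (-P) 1

/-- Internal stability of the feedback loop of the plant `P` and the controller `K`, where the
stable systems are those with entries in the subring `R`. The plant need not be square. -/
def InternallyStabilizesOver (R : Subring F) (P : Matrix p m F) (K : Matrix m p F) : Prop :=
  IsUnit (feedbackMatrix P K) ∧ (feedbackMatrix P K)⁻¹ ∈ R.toAddSubgroup.matrix

theorem isUnit_feedbackMatrix_iff : IsUnit (feedbackMatrix P K) ↔ IsUnit (1 - P * K) := by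
  simp only [isUnit_iff_isUnit_det, det_fromBlocks_one₁₁, Matrix.neg_mul, Matrix.mul_neg,
    neg_neg]

theorem feedbackMatrix_mul_eq_one (hP : Mh * P = Nh) (hY : (Mh - Nh * K) * Y = 1) :
    feedbackMatrix P K * (fromBlocks 1 0 0 0 + graphMatrix K * Y * fromCols Nh Mh) = 1 := by
  have hMh : (1 - P * K) * Y * Mh = 1 := by
    rw [mul_eq_one_comm, ← Matrix.mul_assoc, Matrix.mul_sub, Matrix.mul_one, ← Matrix.mul_assoc, hP,
      hY]
  have hNh : (1 - P * K) * Y * Nh = P := by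
    rw [← hP, ← Matrix.mul_assoc, hMh, Matrix.one_mul]
  have hK : feedbackMatrix P K * graphMatrix K = fromRows 0 (1 - P * K) := by
    simp [fromBlocks_mul_fromRows, sub_eq_neg_add]
  calc
    _ = fromBlocks 1 0 (-P) 0 + fromRows 0 ((1 - P * K) * Y) * fromCols Nh Mh := by
      rw [Matrix.mul_add, ← Matrix.mul_assoc, ← Matrix.mul_assoc, hK, fromBlocks_multiply,
        fromRows_mul, Matrix.zero_mul]
      simp
    _ = 1 := by simp [hMh, hNh, fromBlocks_add, fromBlocks_one]

theorem internallyStabilizesOver_iff_exists_mul_eq_one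
    (hMh : IsUnit Mh) (hP : Mh * P = Nh) (hBezout : Mh * V - Nh * U = 1)
    (hL : fromCols Nh Mh ∈ R.toAddSubgroup.matrix)
    (hUV : fromRows (-U) V ∈ R.toAddSubgroup.matrix) :
    InternallyStabilizesOver R P K ↔
      ∃ Y : Matrix p p F, (Mh - Nh * K) * Y = 1 ∧ graphMatrix K * Y ∈ R.toAddSubgroup.matrix := by
  have hLinv : fromCols Nh Mh * fromRows (-U) V = 1 := by
    rw [fromCols_mul_fromRows, ← hBezout, Matrix.mul_neg, neg_add_eq_sub]
  have hE : fromBlocks (1 : Matrix m m F) 0 0 (0 : Matrix p p F) ∈ R.toAddSubgroup.matrix :=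
    fromBlocks_mem_matrix_iff.mpr ⟨⟨one_mem_matrix, zero_mem _⟩, zero_mem _, zero_mem _⟩
  have hstable {Y : Matrix p p F} (hY : (Mh - Nh * K) * Y = 1) :
      (feedbackMatrix P K)⁻¹ ∈ R.toAddSubgroup.matrix ↔
        graphMatrix K * Y ∈ R.toAddSubgroup.matrix := by
    rw [Matrix.inv_eq_right_inv (feedbackMatrix_mul_eq_one hP hY), add_mem_cancel_left hE,
      mul_mem_matrix_iff_of_mul_eq_one hL hUV hLinv]
  constructor
  · rintro ⟨hunit, hinv⟩
    have hfactor : Mh - Nh * K = Mh * (1 - P * K) := by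
      rw [← hP, Matrix.mul_sub, Matrix.mul_one, Matrix.mul_assoc]
    obtain ⟨Y, hY⟩ := (hfactor ▸ hMh.mul (isUnit_feedbackMatrix_iff.mp hunit)).exists_right_inv
    exact ⟨Y, hY, (hstable hY).mp hinv⟩
  · rintro ⟨Y, hY, hKY⟩
    exact ⟨.of_mul_eq_one _ (feedbackMatrix_mul_eq_one hP hY), (hstable hY).mpr hKY⟩

theorem fromBlocks_mul_graphMatrix_eq_iff_of_mul_eq_one
    (hBezout : fromBlocks Vh (-Uh) (-Nh) Mh * fromBlocks M U N V = 1) :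
    fromBlocks M U N V * graphMatrix Q = graphMatrix K * Y ↔
      Q = (Vh * K - Uh) * Y ∧ (Mh - Nh * K) * Y = 1 := by
  have hinv : fromBlocks Vh (-Uh) (-Nh) Mh * (graphMatrix K * Y) =
      fromRows ((Vh * K - Uh) * Y) ((Mh - Nh * K) * Y) := by
    rw [← Matrix.mul_assoc, fromBlocks_mul_fromRows, fromRows_mul]
    simp [sub_eq_add_neg, add_comm]
  calc
    _ ↔ graphMatrix Q = fromBlocks Vh (-Uh) (-Nh) Mh * (graphMatrix K * Y) :=
      ⟨fun h ↦ by rw [← h, ← Matrix.mul_assoc, hBezout, Matrix.one_mul],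
        fun h ↦ by rw [h, ← Matrix.mul_assoc, mul_eq_one_comm.mp hBezout, Matrix.one_mul]⟩
    _ ↔ _ := by rw [hinv, fromRows_ext_iff, @eq_comm _ 1]

theorem exists_mem_matrix_mul_graphMatrix_eq_iff
    (hBezout : fromBlocks Vh (-Uh) (-Nh) Mh * fromBlocks M U N V = 1)
    (hW : fromBlocks M U N V ∈ R.toAddSubgroup.matrix)
    (hWh : fromBlocks Vh (-Uh) (-Nh) Mh ∈ R.toAddSubgroup.matrix) :
    (∃ Q : Matrix m p F, Q ∈ R.toAddSubgroup.matrix ∧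
        fromBlocks M U N V * graphMatrix Q = graphMatrix K * Y) ↔
      (Mh - Nh * K) * Y = 1 ∧ graphMatrix K * Y ∈ R.toAddSubgroup.matrix := by
  constructor
  · rintro ⟨Q, hQ, hWQ⟩
    refine ⟨((fromBlocks_mul_graphMatrix_eq_iff_of_mul_eq_one hBezout).mp hWQ).2, ?_⟩
    exact hWQ ▸ mul_mem_matrix hW (fromRows_mem_matrix_iff.mpr ⟨hQ, one_mem_matrix⟩)
  · rintro ⟨hY, hKY⟩
    have hWQ := (fromBlocks_mul_graphMatrix_eq_iff_of_mul_eq_one hBezout).mpr ⟨rfl, hY⟩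
    have hQ := mul_mem_matrix hWh hKY
    rw [← hWQ, ← Matrix.mul_assoc, hBezout, Matrix.one_mul] at hQ
    exact ⟨_, (fromRows_mem_matrix_iff.mp hQ).1, hWQ⟩

theorem isUnit_and_eq_mul_inv_iff_exists_mul_graphMatrix_eq
    (hBezout : fromBlocks Vh (-Uh) (-Nh) Mh * fromBlocks M U N V = 1) :
    (IsUnit (V + N * Q) ∧ K = (U + M * Q) * (V + N * Q)⁻¹) ↔
      ∃ Y : Matrix p p F, fromBlocks M U N V * graphMatrix Q = graphMatrix K * Y := by
  constructor
  · rintro ⟨hunit, rfl⟩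
    refine ⟨V + N * Q, fromBlocks_mul_graphMatrix_eq_iff.mpr ⟨?_, rfl⟩⟩
    rw [Matrix.nonsing_inv_mul_cancel_right _ _ ((isUnit_iff_isUnit_det _).mp hunit)]
  · rintro ⟨Y, hWQ⟩
    have hunit : IsUnit Y :=
      .of_mul_eq_one_right _ ((fromBlocks_mul_graphMatrix_eq_iff_of_mul_eq_one hBezout).mp hWQ).2
    obtain ⟨hKY, hY⟩ := fromBlocks_mul_graphMatrix_eq_iff.mp hWQ
    rw [hKY, hY, Matrix.mul_nonsing_inv_cancel_right _ _ ((isUnit_iff_isUnit_det _).mp hunit)]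
    exact ⟨hunit, rfl⟩

theorem youla_kucera_parameterization_general
    (hW : fromBlocks M U N V ∈ R.toAddSubgroup.matrix)
    (hWh : fromBlocks Vh (-Uh) (-Nh) Mh ∈ R.toAddSubgroup.matrix)
    (hMh : IsUnit Mh) (hP : P = Mh⁻¹ * Nh)
    (hBezout : fromBlocks Vh (-Uh) (-Nh) Mh * fromBlocks M U N V = 1) :
    InternallyStabilizesOver R P K ↔
      ∃ Q : Matrix m p F, Q ∈ R.toAddSubgroup.matrix ∧
        IsUnit (V + N * Q) ∧ K = (U + M * Q) * (V + N * Q)⁻¹ := by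
  have hMhP : Mh * P = Nh := by
    rw [hP, Matrix.mul_nonsing_inv_cancel_left _ _ ((isUnit_iff_isUnit_det _).mp hMh)]
  have hMhV : Mh * V - Nh * U = 1 := by
    rw [fromBlocks_multiply, ← fromBlocks_one, fromBlocks_inj] at hBezout
    rw [← hBezout.2.2.2, Matrix.neg_mul, neg_add_eq_sub]
  obtain ⟨⟨-, hU⟩, -, hV⟩ := fromBlocks_mem_matrix_iff.mp hW
  obtain ⟨-, hNh, hMhmem⟩ := fromBlocks_mem_matrix_iff.mp hWh
  calc
    _ ↔ ∃ Y : Matrix p p F, (Mh - Nh * K) * Y = 1 ∧ graphMatrix K * Y ∈ R.toAddSubgroup.matrix :=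
      internallyStabilizesOver_iff_exists_mul_eq_one hMh hMhP hMhV
        (fromCols_mem_matrix_iff.mpr ⟨neg_mem_iff.mp hNh, hMhmem⟩)
        (fromRows_mem_matrix_iff.mpr ⟨neg_mem hU, hV⟩)
    _ ↔ ∃ Y : Matrix p p F, ∃ Q : Matrix m p F, Q ∈ R.toAddSubgroup.matrix ∧
        fromBlocks M U N V * graphMatrix Q = graphMatrix K * Y := by
      simp only [exists_mem_matrix_mul_graphMatrix_eq_iff hBezout hW hWh]
    _ ↔ _ := by
      simp only [isUnit_and_eq_mul_inv_iff_exists_mul_graphMatrix_eq hBezout,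
        ← exists_and_left]
      exact exists_comm

end YoulaKucera

/-- Youla–Kučera parameterization. Given a doubly coprime
factorization of `P` over `RH∞` satisfying the general Bézout identity, a
controller `K` internally stabilizes `P` iff `K = (U + MQ)(V + NQ)⁻¹` for some
matrix `Q` over `RH∞` with `V + NQ` invertible. -/
theorem youla_kucera_parameterization (n : ℕ)
    (P M N U V Mh Nh Uh Vh : Matrix (Fin n) (Fin n) (RatFunc ℂ))
    (hMs : ∀ i j, IsRHInf (M i j)) (hNs : ∀ i j, IsRHInf (N i j))
    (hUs : ∀ i j, IsRHInf (U i j)) (hVs : ∀ i j, IsRHInf (V i j))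
    (hMhs : ∀ i j, IsRHInf (Mh i j)) (hNhs : ∀ i j, IsRHInf (Nh i j))
    (hUhs : ∀ i j, IsRHInf (Uh i j)) (hVhs : ∀ i j, IsRHInf (Vh i j))
    (hM : IsUnit M) (hMh : IsUnit Mh)
    (hPr : P = N * M⁻¹) (hPl : P = Mh⁻¹ * Nh)
    (hBezout : Matrix.fromBlocks Vh (-Uh) (-Nh) Mh *
        Matrix.fromBlocks M U N V = 1)
    (K : Matrix (Fin n) (Fin n) (RatFunc ℂ)) :
    InternallyStabilizes P K ↔
      ∃ Q : Matrix (Fin n) (Fin n) (RatFunc ℂ),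
        (∀ i j, IsRHInf (Q i j)) ∧ IsUnit (V + N * Q)
          ∧ K = (U + M * Q) * (V + N * Q)⁻¹ := by
  simp only [InternallyStabilizes, forall_isRHInf_iff_mem_matrix] at *
  exact youla_kucera_parameterization_general
    (fromBlocks_mem_matrix_iff.mpr ⟨⟨hMs, hUs⟩, hNs, hVs⟩)
    (fromBlocks_mem_matrix_iff.mpr ⟨⟨hVhs, neg_mem hUhs⟩, neg_mem hNhs, hMhs⟩) hMh hPl hBezout
end

section
/- Let A ∈ ℂ^{k×k}, B₂ ∈ ℂ^{k×n}, C₂ ∈ ℂ^{n×k}, D₂₂ ∈ ℂ^{n×n}, F ∈ ℂ^{n×k}, L ∈ ℂ^{k×n}. For every s ∈ ℂ such that both sI − (A + B₂F) and sI − (A + LC₂) are invertible, define: M(s) := I + F(sI − A − B₂F)⁻¹B₂, U(s) := −F(sI − A − B₂F)⁻¹L, N(s) := D₂₂ + (C₂ + D₂₂F)(sI − A − B₂F)⁻¹B₂, V(s) := I − (C₂ + D₂₂F)(sI − A − B₂F)⁻¹L, V̂(s) := I − F(sI − A − LC₂)⁻¹(B₂ + LD₂₂), Û(s) := −F(sI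 − A − LC₂)⁻¹L, N̂(s) := D₂₂ + C₂(sI − A − LC₂)⁻¹(B₂ + LD₂₂), M̂(s) := I + C₂(sI − A − LC₂)⁻¹L. Then the general Bézout identity holds at every such s: [[V̂(s), −Û(s)],[−N̂(s), M̂(s)]] · [[M(s), U(s)],[N(s), V(s)]] = I_{2n}. -/
open Matrix

/-!
The transfer function of `(A, B, C, D)` with `E * D = 1` has the left inverse realized by
`(A - B E C, -B E, E C, E)`: with the resolvents `X = (s - A)⁻¹` and `Y = (s - A + B E C)⁻¹`, the
product of the two is `1 + E C (X - Y - Y (B E C) X) B`, and the bracket vanishes by the resolvent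
identity. The right factor `[[M, U], [N, V]]` has feedthrough `[[1, 0], [D₂₂, 1]]`, with inverse
`[[1, 0], [-D₂₂, 1]]`, and its inverse system is exactly the realization of `[[V̂, -Û], [-N̂, M̂]]`.
-/

section TransferFunction

variable {R k m m₁ m₂ p p₁ p₂ : Type*} [CommRing R] [Fintype k] [DecidableEq k]

/-- The transfer function `s ↦ C (sI - A)⁻¹ B + D` of the state-space realization `(A, B, C, D)`
with state, input and output coordinates indexed by `k`, `m` and `p`. At a point `s` where `sI - A`
is not invertible the resolvent is the junk value `0`. -/
noncomputable def transferFunction (A : Matrix k k R) (B : Matrix k m R) (C : Matrix p k R)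
    (D : Matrix p m R) (s : R) : Matrix p m R :=
  C * (s • (1 : Matrix k k R) - A)⁻¹ * B + D

theorem transferFunction_fromBlocks (A : Matrix k k R) (B₁ : Matrix k m₁ R) (B₂ : Matrix k m₂ R)
    (C₁ : Matrix p₁ k R) (C₂ : Matrix p₂ k R) (D₁₁ : Matrix p₁ m₁ R) (D₁₂ : Matrix p₁ m₂ R)
    (D₂₁ : Matrix p₂ m₁ R) (D₂₂ : Matrix p₂ m₂ R) (s : R) :
    transferFunction A (fromCols B₁ B₂) (fromRows C₁ C₂) (fromBlocks D₁₁ D₁₂ D₂₁ D₂₂) s =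
      fromBlocks (transferFunction A B₁ C₁ D₁₁ s) (transferFunction A B₂ C₁ D₁₂ s)
        (transferFunction A B₁ C₂ D₂₁ s) (transferFunction A B₂ C₂ D₂₂ s) := by
  simp only [transferFunction, fromRows_mul _ _ (_⁻¹), fromRows_mul_fromCols, fromBlocks_add]

theorem transferFunction_leftInverse_mul [Fintype m] [DecidableEq m] [Fintype p]
    {A : Matrix k k R} {B : Matrix k m R} {C : Matrix p k R} {D : Matrix p m R} {E : Matrix m p R}
    {s : R} (hED : E * D = 1) (hA : IsUnit (s • (1 : Matrix k k R) - A))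
    (hA' : IsUnit (s • (1 : Matrix k k R) - (A - B * E * C))) :
    transferFunction (A - B * E * C) (-(B * E)) (E * C) E s * transferFunction A B C D s = 1 := by
  unfold transferFunction
  set X := (s • (1 : Matrix k k R) - A)⁻¹
  set Y := (s • (1 : Matrix k k R) - (A - B * E * C))⁻¹
  have resolvent_identity : Y - X = Y * -(B * E * C) * X := by
    rw [Matrix.inv_sub_inv (iff_of_true hA' hA), sub_sub_sub_cancel_left, sub_sub_cancel_left]
  calc (E * C * Y * -(B * E) + E) * (C * X * B + D)
      = E * C * (Y * -(B * E * C) * X + X) * B - E * C * Y * B * (E * D) + E * D := by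
        simp only [Matrix.add_mul, Matrix.mul_add, Matrix.neg_mul, Matrix.mul_neg,
          Matrix.mul_assoc]
        abel
    _ = 1 := by rw [← resolvent_identity, hED, sub_add_cancel, Matrix.mul_one, sub_self, zero_add]

end TransferFunction

section Bezout

variable {R k m p : Type*} [CommRing R] [Fintype k] [DecidableEq k] [Fintype m] [DecidableEq m]
  [Fintype p] [DecidableEq p]

theorem transferFunction_leftFactor_mul_rightFactor {A : Matrix k k R} {B : Matrix k m R}
    {C : Matrix p k R} {D : Matrix p m R} {F : Matrix m k R} {L : Matrix k p R} {s : R}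
    (hF : IsUnit (s • (1 : Matrix k k R) - (A + B * F)))
    (hL : IsUnit (s • (1 : Matrix k k R) - (A + L * C))) :
    transferFunction (A + L * C) (fromCols (-(B + L * D)) L) (fromRows F C)
        (fromBlocks 1 0 (-D) 1) s *
      transferFunction (A + B * F) (fromCols B (-L)) (fromRows F (C + D * F))
        (fromBlocks 1 0 D 1) s = 1 := by
  set E : Matrix (m ⊕ p) (m ⊕ p) R := fromBlocks 1 0 (-D) 1
  have feedthrough_inv : E * fromBlocks 1 0 D 1 = 1 := by
    simp [E, fromBlocks_multiply]
  have input : -(fromCols B (-L) * E) = fromCols (-(B + L * D)) L := by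
    simp [E, fromCols_mul_fromBlocks]
  have output : E * fromRows F (C + D * F) = fromRows F C := by
    simp [E, fromBlocks_mul_fromRows]
  have state : A + B * F - fromCols B (-L) * E * fromRows F (C + D * F) = A + L * C := by
    rw [Matrix.mul_assoc, output, fromCols_mul_fromRows, Matrix.neg_mul]
    abel
  rw [← state] at hL
  simpa only [state, input, output] using transferFunction_leftInverse_mul feedthrough_inv hF hL

theorem state_space_bezout_identity_general
    (A : Matrix k k R) (B2 : Matrix k m R) (C2 : Matrix p k R) (D22 : Matrix p m R)
    (F : Matrix m k R) (L : Matrix k p R) (s : R)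
    (hF : IsUnit (s • (1 : Matrix k k R) - (A + B2 * F)))
    (hL : IsUnit (s • (1 : Matrix k k R) - (A + L * C2)))
    (Ms Vhs : Matrix m m R) (Us Uhs : Matrix m p R) (Ns Nhs : Matrix p m R)
    (Vs Mhs : Matrix p p R)
    (hMs : Ms = 1 + F * (s • (1 : Matrix k k R) - A - B2 * F)⁻¹ * B2)
    (hUs : Us = -(F * (s • (1 : Matrix k k R) - A - B2 * F)⁻¹ * L))
    (hNs : Ns = D22 + (C2 + D22 * F) * (s • (1 : Matrix k k R) - A - B2 * F)⁻¹ * B2)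
    (hVs : Vs = 1 - (C2 + D22 * F) * (s • (1 : Matrix k k R) - A - B2 * F)⁻¹ * L)
    (hVhs : Vhs = 1 - F * (s • (1 : Matrix k k R) - A - L * C2)⁻¹ * (B2 + L * D22))
    (hUhs : Uhs = -(F * (s • (1 : Matrix k k R) - A - L * C2)⁻¹ * L))
    (hNhs : Nhs = D22 + C2 * (s • (1 : Matrix k k R) - A - L * C2)⁻¹ * (B2 + L * D22))
    (hMhs : Mhs = 1 + C2 * (s • (1 : Matrix k k R) - A - L * C2)⁻¹ * L) :
    fromBlocks Vhs (-Uhs) (-Nhs) Mhs * fromBlocks Ms Us Ns Vs = 1 := by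
  have left_factor : fromBlocks Vhs (-Uhs) (-Nhs) Mhs =
      transferFunction (A + L * C2) (fromCols (-(B2 + L * D22)) L) (fromRows F C2)
        (fromBlocks 1 0 (-D22) 1) s := by
    rw [transferFunction_fromBlocks, hVhs, hUhs, hNhs, hMhs]
    unfold transferFunction
    simp only [sub_sub, Matrix.mul_neg, neg_neg, add_zero]
    congr 1 <;> abel
  have right_factor : fromBlocks Ms Us Ns Vs =
      transferFunction (A + B2 * F) (fromCols B2 (-L)) (fromRows F (C2 + D22 * F))
        (fromBlocks 1 0 D22 1) s := by
    rw [transferFunction_fromBlocks, hMs, hUs, hNs, hVs]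
    unfold transferFunction
    simp only [sub_sub, Matrix.mul_neg, add_zero]
    congr 1 <;> abel
  rw [left_factor, right_factor, transferFunction_leftFactor_mul_rightFactor hF hL]

end Bezout

/-- The state-space formulas for a doubly coprime factorization
satisfy the general Bézout identity
`[[V̂(s), -Û(s)],[-N̂(s), M̂(s)]]·[[M(s), U(s)],[N(s), V(s)]] = I` at every
`s ∈ ℂ` where `sI - (A + B₂F)` and `sI - (A + LC₂)` are invertible. -/
theorem state_space_bezout_identity (k n : ℕ)
    (A : Matrix (Fin k) (Fin k) ℂ) (B2 : Matrix (Fin k) (Fin n) ℂ)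
    (C2 : Matrix (Fin n) (Fin k) ℂ) (D22 : Matrix (Fin n) (Fin n) ℂ)
    (F : Matrix (Fin n) (Fin k) ℂ) (L : Matrix (Fin k) (Fin n) ℂ)
    (s : ℂ)
    (hF : IsUnit (s • (1 : Matrix (Fin k) (Fin k) ℂ) - (A + B2 * F)))
    (hL : IsUnit (s • (1 : Matrix (Fin k) (Fin k) ℂ) - (A + L * C2)))
    (Ms Us Ns Vs Vhs Uhs Nhs Mhs : Matrix (Fin n) (Fin n) ℂ)
    (hMs : Ms = 1 + F * (s • (1 : Matrix (Fin k) (Fin k) ℂ) - A - B2 * F)⁻¹ * B2)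
    (hUs : Us = -(F * (s • (1 : Matrix (Fin k) (Fin k) ℂ) - A - B2 * F)⁻¹ * L))
    (hNs : Ns = D22 + (C2 + D22 * F) *
        (s • (1 : Matrix (Fin k) (Fin k) ℂ) - A - B2 * F)⁻¹ * B2)
    (hVs : Vs = 1 - (C2 + D22 * F) *
        (s • (1 : Matrix (Fin k) (Fin k) ℂ) - A - B2 * F)⁻¹ * L)
    (hVhs : Vhs = 1 - F *
        (s • (1 : Matrix (Fin k) (Fin k) ℂ) - A - L * C2)⁻¹ * (B2 + L * D22))
    (hUhs : Uhs = -(F * (s • (1 : Matrix (Fin k) (Fin k) ℂ) - A - L * C2)⁻¹ * L))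
    (hNhs : Nhs = D22 + C2 *
        (s • (1 : Matrix (Fin k) (Fin k) ℂ) - A - L * C2)⁻¹ * (B2 + L * D22))
    (hMhs : Mhs = 1 + C2 *
        (s • (1 : Matrix (Fin k) (Fin k) ℂ) - A - L * C2)⁻¹ * L) :
    Matrix.fromBlocks Vhs (-Uhs) (-Nhs) Mhs *
        Matrix.fromBlocks Ms Us Ns Vs = 1 :=
  state_space_bezout_identity_general A B2 C2 D22 F L s hF hL Ms Vhs Us Uhs Ns Nhs Vs Mhs
    hMs hUs hNs hVs hVhs hUhs hNhs hMhs
end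

section
/- Let A ∈ ℂ^{k×k}, B₂ ∈ ℂ^{k×n}, C₂ ∈ ℂ^{n×k}, D₂₂ ∈ ℂ^{n×n}, F ∈ ℂ^{n×k}. For every s ∈ ℂ such that both sI − A and sI − (A + B₂F) are invertible, the matrix M(s) := I + F(sI − A − B₂F)⁻¹B₂ is invertible with inverse M(s)⁻¹ = I − F(sI − A)⁻¹B₂, and with N(s) := D₂₂ + (C₂ + D₂₂F)(sI − A − B₂F)⁻¹B₂ one has N(s) M(s)⁻¹ = C₂(sI − A)⁻¹B₂ + D₂₂, i.e. (N, M) is a right factorization of the plant transfer function P₂₂(s) = C₂(sI − A)⁻¹B₂ + D₂₂. -/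
open Matrix

/-!
With `P = sI - A`, the resolvent identity `(P - BF)⁻¹ - P⁻¹ = (P - BF)⁻¹(BF)P⁻¹`, multiplied on the
right by `B`, says `(P - BF)⁻¹B (I - FP⁻¹B) = P⁻¹B`: the factor `I - FP⁻¹B` undoes the feedback `F`.
Since `M = I + F(P - BF)⁻¹B` and `N = C(P - BF)⁻¹B + DM`, multiplying `M` and `N` on the right by
this factor gives `I` and `CP⁻¹B + D`.
-/

section StateFeedback

variable {ι m p R : Type*} [Fintype ι] [DecidableEq ι] [Fintype m] [DecidableEq m] [CommRing R]
  {P : Matrix ι ι R} {B : Matrix ι m R} {F : Matrix m ι R}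

theorem inv_sub_mul_mul_one_sub_inv (hP : IsUnit P) (hPBF : IsUnit (P - B * F)) :
    (P - B * F)⁻¹ * B * (1 - F * P⁻¹ * B) = P⁻¹ * B := by
  have resolvent : (P - B * F)⁻¹ - P⁻¹ = (P - B * F)⁻¹ * (B * F) * P⁻¹ := by
    rw [Matrix.inv_sub_inv (iff_of_true hPBF hP), sub_sub_cancel]
  calc (P - B * F)⁻¹ * B * (1 - F * P⁻¹ * B)
      = ((P - B * F)⁻¹ - (P - B * F)⁻¹ * (B * F) * P⁻¹) * B := by
        simp only [Matrix.mul_sub, Matrix.sub_mul, Matrix.mul_one, Matrix.mul_assoc]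
    _ = P⁻¹ * B := by rw [← resolvent, sub_sub_cancel]

theorem one_add_mul_inv_sub_mul_mul_one_sub_inv (hP : IsUnit P) (hPBF : IsUnit (P - B * F)) :
    (1 + F * (P - B * F)⁻¹ * B) * (1 - F * P⁻¹ * B) = 1 := by
  calc (1 + F * (P - B * F)⁻¹ * B) * (1 - F * P⁻¹ * B)
      = 1 - F * P⁻¹ * B + F * ((P - B * F)⁻¹ * B * (1 - F * P⁻¹ * B)) := by
        simp only [Matrix.add_mul, Matrix.one_mul, Matrix.mul_assoc]
    _ = 1 := by
        rw [inv_sub_mul_mul_one_sub_inv hP hPBF, ← Matrix.mul_assoc, sub_add_cancel]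

theorem add_mul_inv_sub_mul_mul_one_sub_inv (hP : IsUnit P) (hPBF : IsUnit (P - B * F))
    (C : Matrix p ι R) (D : Matrix p m R) :
    (D + (C + D * F) * (P - B * F)⁻¹ * B) * (1 - F * P⁻¹ * B) = C * P⁻¹ * B + D := by
  have numerator_eq : D + (C + D * F) * (P - B * F)⁻¹ * B =
      C * ((P - B * F)⁻¹ * B) + D * (1 + F * (P - B * F)⁻¹ * B) := by
    simp only [Matrix.add_mul, Matrix.mul_add, Matrix.mul_one, Matrix.mul_assoc]
    abel
  rw [numerator_eq, Matrix.add_mul, Matrix.mul_assoc C, Matrix.mul_assoc D,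
    inv_sub_mul_mul_one_sub_inv hP hPBF, one_add_mul_inv_sub_mul_mul_one_sub_inv hP hPBF,
    Matrix.mul_one, Matrix.mul_assoc C]

theorem right_factorization_of_plant_general {A : Matrix ι ι R} {C : Matrix p ι R}
    {D : Matrix p m R} {s : R} (hA : IsUnit (s • (1 : Matrix ι ι R) - A))
    (hABF : IsUnit (s • (1 : Matrix ι ι R) - (A + B * F)))
    {M : Matrix m m R} {N : Matrix p m R}
    (hM : M = 1 + F * (s • (1 : Matrix ι ι R) - A - B * F)⁻¹ * B)
    (hN : N = D + (C + D * F) * (s • (1 : Matrix ι ι R) - A - B * F)⁻¹ * B) :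
    IsUnit M
      ∧ M⁻¹ = 1 - F * (s • (1 : Matrix ι ι R) - A)⁻¹ * B
      ∧ N * M⁻¹ = C * (s • (1 : Matrix ι ι R) - A)⁻¹ * B + D := by
  rw [← sub_sub] at hABF
  have right_inverse : M * (1 - F * (s • (1 : Matrix ι ι R) - A)⁻¹ * B) = 1 :=
    hM ▸ one_add_mul_inv_sub_mul_mul_one_sub_inv hA hABF
  have inv_eq : M⁻¹ = 1 - F * (s • (1 : Matrix ι ι R) - A)⁻¹ * B := inv_eq_right_inv right_inverse
  refine ⟨IsUnit.of_mul_eq_one _ right_inverse, inv_eq, ?_⟩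
  rw [inv_eq, hN, add_mul_inv_sub_mul_mul_one_sub_inv hA hABF]

end StateFeedback

/-- For every `s` at which `sI - A` and `sI - (A + B₂F)` are
invertible, `M(s) = I + F(sI - A - B₂F)⁻¹B₂` is invertible with inverse
`I - F(sI - A)⁻¹B₂`, and with `N(s) = D₂₂ + (C₂ + D₂₂F)(sI - A - B₂F)⁻¹B₂` one
has `N(s)M(s)⁻¹ = C₂(sI - A)⁻¹B₂ + D₂₂`, i.e. `(N, M)` is a right
factorization of the plant transfer function `P₂₂`. -/
theorem right_factorization_of_plant (k n : ℕ)
    (A : Matrix (Fin k) (Fin k) ℂ) (B2 : Matrix (Fin k) (Fin n) ℂ)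
    (C2 : Matrix (Fin n) (Fin k) ℂ) (D22 : Matrix (Fin n) (Fin n) ℂ)
    (F : Matrix (Fin n) (Fin k) ℂ)
    (s : ℂ)
    (hA : IsUnit (s • (1 : Matrix (Fin k) (Fin k) ℂ) - A))
    (hABF : IsUnit (s • (1 : Matrix (Fin k) (Fin k) ℂ) - (A + B2 * F)))
    (Ms Ns : Matrix (Fin n) (Fin n) ℂ)
    (hMs : Ms = 1 + F * (s • (1 : Matrix (Fin k) (Fin k) ℂ) - A - B2 * F)⁻¹ * B2)
    (hNs : Ns = D22 + (C2 + D22 * F) *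
        (s • (1 : Matrix (Fin k) (Fin k) ℂ) - A - B2 * F)⁻¹ * B2) :
    IsUnit Ms
      ∧ Ms⁻¹ = 1 - F * (s • (1 : Matrix (Fin k) (Fin k) ℂ) - A)⁻¹ * B2
      ∧ Ns * Ms⁻¹ = C2 * (s • (1 : Matrix (Fin k) (Fin k) ℂ) - A)⁻¹ * B2 + D22 :=
  right_factorization_of_plant_general hA hABF hMs hNs
end
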